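/- Let D be a bounded domain in ℝ³ such that for every continuous function f on ∂D there exists a function continuous on the closure of D, harmonic in D, and equal to f on ∂D (a Dirichlet domain), and let u : closure(D) → ℝ be continuous on the closure of D and C² in D. Fix μ > 0. If for every x ∈ D there exists r(x) > 0 such that the closure of B_{r(x)}(x) is contained in D and M(x, r(x), u) = (sinh(μ r(x))/(μ r(x))) · u(x), then u satisfies ∇²u − μ²u = 0 in D. -/

import Mathlib

open MeasureTheory Metric

/-- The spherical mean `M(x, r, u) = (1/ω_m) ∫_{S_1(0)} u(x + r y) dS_y`,
realized as the average of `y ↦ u (x + r • y)` over the unit sphere with respect to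
the `(m-1)`-dimensional Hausdorff (surface-area) measure. -/
noncomputable def sphereMean (m : ℕ) (u : EuclideanSpace ℝ (Fin m) → ℝ)
    (x : EuclideanSpace ℝ (Fin m)) (r : ℝ) : ℝ :=
  ⨍ y in sphere (0 : EuclideanSpace ℝ (Fin m)) 1, u (x + r • y) ∂μH[(m : ℝ) - 1]

/-- The iterated spherical mean
`I(x, r', r, u) = (1/ω_m²) ∫_{S_1(0)} ∫_{S_1(0)} u(x + r' y + r z) dS_z dS_y`. -/
noncomputable def iterSphereMean (m : ℕ) (u : EuclideanSpace ℝ (Fin m) → ℝ)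
    (x : EuclideanSpace ℝ (Fin m)) (r' r : ℝ) : ℝ :=
  ⨍ y in sphere (0 : EuclideanSpace ℝ (Fin m)) 1,
    ⨍ z in sphere (0 : EuclideanSpace ℝ (Fin m)) 1,
      u (x + r' • y + r • z) ∂μH[(m : ℝ) - 1] ∂μH[(m : ℝ) - 1]

/-- The Laplacian `∇²u (x) = ∑ i ∂²u/∂x_i² (x)`. -/
noncomputable def laplacian (m : ℕ) (u : EuclideanSpace ℝ (Fin m) → ℝ)
    (x : EuclideanSpace ℝ (Fin m)) : ℝ :=
  ∑ i : Fin m, fderiv ℝ (fun y => fderiv ℝ u y (EuclideanSpace.single i 1)) x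
    (EuclideanSpace.single i 1)

local notation "E" => EuclideanSpace ℝ (Fin 3)

lemma ph_integrable (σ : Measure E) [IsProbabilityMeasure σ]
    (hs : σ.restrict (sphere 0 1) = σ) {f : E → ℝ} (hf : Continuous f) : Integrable f σ := by
  rw [← hs]
  exact hf.continuousOn.integrableOn_compact (isCompact_sphere 0 1)

lemma ph_cont_param (σ : Measure E) [IsProbabilityMeasure σ]
    (hs : σ.restrict (sphere 0 1) = σ) {Φ : ℝ → E → ℝ} (hΦ : Continuous (Function.uncurry Φ)) :
    Continuous (fun t => ∫ y, Φ t y ∂σ) := by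
  rw [← hs]
  exact continuous_parametric_integral_of_continuous hΦ (isCompact_sphere 0 1)

lemma ph_hasDerivAt (σ : Measure E) [IsProbabilityMeasure σ]
    (hs : σ.restrict (sphere 0 1) = σ) {Φ Φ' : ℝ → E → ℝ} (hΦ : Continuous (Function.uncurry Φ))
    (hΦ' : Continuous (Function.uncurry Φ'))
    (hd : ∀ t y, HasDerivAt (fun t => Φ t y) (Φ' t y) t) (t₀ : ℝ) :
    HasDerivAt (fun t => ∫ y, Φ t y ∂σ) (∫ y, Φ' t₀ y ∂σ) t₀ := by
  obtain ⟨C, hC⟩ := ((isCompact_closedBall t₀ 1).prod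
    (isCompact_sphere (0 : E) 1)).exists_bound_of_continuousOn hΦ'.continuousOn
  have hae : ∀ᵐ y ∂σ, y ∈ sphere (0 : E) 1 := by
    rw [← hs]; exact ae_restrict_mem isClosed_sphere.measurableSet
  refine (hasDerivAt_integral_of_dominated_loc_of_deriv_le (μ := σ) (F := Φ) (F' := Φ')
    (bound := fun _ => C) (closedBall_mem_nhds t₀ one_pos) ?_ ?_ ?_ ?_ ?_ ?_).2
  · refine Filter.Eventually.of_forall fun t => ?_
    exact (ph_integrable σ hs (hΦ.comp (Continuous.prodMk_right t))).aestronglyMeasurable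
  · exact ph_integrable σ hs (hΦ.comp (Continuous.prodMk_right t₀))
  · exact (ph_integrable σ hs (hΦ'.comp (Continuous.prodMk_right t₀))).aestronglyMeasurable
  · filter_upwards [hae] with y hy t ht
    exact hC (t, y) ⟨ht, hy⟩
  · exact integrable_const C
  · exact Filter.Eventually.of_forall fun y t _ => hd t y

/-- infinitesimal rotation in the plane `i,j` -/
noncomputable def phA (i j : Fin 3) : E →L[ℝ] E :=
  (EuclideanSpace.proj i : E →L[ℝ] ℝ).smulRight (EuclideanSpace.single j (1:ℝ))
    - (EuclideanSpace.proj j : E →L[ℝ] ℝ).smulRight (EuclideanSpace.single i (1:ℝ))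

lemma phA_apply (i j : Fin 3) (y : E) :
    phA i j y = y i • EuclideanSpace.single j (1:ℝ) - y j • EuclideanSpace.single i (1:ℝ) := by
  simp [phA]

noncomputable def phR (i j : Fin 3) (t : ℝ) : E →L[ℝ] E :=
  ContinuousLinearMap.id ℝ E + Real.sin t • phA i j + (1 - Real.cos t) • (phA i j).comp (phA i j)

lemma phR_norm (i j : Fin 3) (hij : i ≠ j) (t : ℝ) (y : E) : ‖phR i j t y‖ = ‖y‖ := by
  have h := Real.sin_sq_add_cos_sq t
  rw [← sq_eq_sq₀ (norm_nonneg _) (norm_nonneg _), EuclideanSpace.norm_sq_eq,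
    EuclideanSpace.norm_sq_eq]
  simp only [Fin.sum_univ_three, Real.norm_eq_abs, sq_abs]
  fin_cases i <;> fin_cases j <;> first | exact absurd rfl hij | skip
  all_goals simp [phR, phA_apply]
  · linear_combination (y 0 ^2 + y 1 ^ 2) * h
  · linear_combination (y 0 ^2 + y 2 ^ 2) * h
  · linear_combination (y 0 ^2 + y 1 ^ 2) * h
  · linear_combination (y 1 ^2 + y 2 ^ 2) * h
  · linear_combination (y 0 ^2 + y 2 ^ 2) * h
  · linear_combination (y 1 ^2 + y 2 ^ 2) * h

noncomputable def phRe (i j : Fin 3) (hij : i ≠ j) (t : ℝ) : E ≃ₗᵢ[ℝ] E :=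
  LinearIsometry.toLinearIsometryEquiv ⟨(phR i j t : E →ₗ[ℝ] E), phR_norm i j hij t⟩ rfl

lemma ph_skew (σ : Measure E) [IsProbabilityMeasure σ]
    (hs : σ.restrict (sphere 0 1) = σ) (hinv : ∀ L : E ≃ₗᵢ[ℝ] E, σ.map L = σ)
    (i j : Fin 3) (hij : i ≠ j) {f : E → ℝ} (hf : ContDiff ℝ 1 f) :
    ∫ y, fderiv ℝ f y (phA i j y) ∂σ = 0 := by
  have hdf : Continuous (fderiv ℝ f) := hf.continuous_fderiv one_ne_zero
  have hR : ∀ t y, HasDerivAt (fun t => phR i j t y)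
      (Real.cos t • phA i j y + Real.sin t • phA i j (phA i j y)) t := by
    intro t y
    have h1 := ((Real.hasDerivAt_sin t).smul_const (phA i j y)).const_add y
    have h2 := ((Real.hasDerivAt_cos t).const_sub 1).smul_const (phA i j (phA i j y))
    have h3 := h1.add h2
    rw [neg_neg] at h3
    exact h3
  have h := ph_hasDerivAt σ hs (Φ := fun t y => f (phR i j t y))
    (Φ' := fun t y => fderiv ℝ f (phR i j t y)
      (Real.cos t • phA i j y + Real.sin t • phA i j (phA i j y)))
    (by simp only [phR, Function.uncurry_def]
        simp
        have := hf.continuous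
        fun_prop) (by
        simp only [phR, Function.uncurry_def]
        simp
        fun_prop) (fun t y => by
      have := ((hf.differentiable one_ne_zero) (phR i j t y)).hasFDerivAt.comp_hasDerivAt t (hR t y)
      exact this) 0
  have hconst : (fun t => ∫ y, f (phR i j t y) ∂σ) = fun _ => ∫ y, f y ∂σ := by
    funext t
    conv_rhs => rw [← hinv (phRe i j hij t)]
    rw [integral_map (phRe i j hij t).continuous.aemeasurable hf.continuous.aestronglyMeasurable]
    rfl
  rw [hconst] at h
  have := h.unique (hasDerivAt_const (0:ℝ) (∫ y, f y ∂σ))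
  simpa [phR] using this
lemma ph_abs {X : Type*} [NormedAddCommGroup X] [NormedSpace ℝ X] [CompleteSpace X]
    (Γ : Submodule ℝ (X × X)) (C : ℝ) (hC : 0 < C)
    (hest : ∀ l : ℝ, 0 ≤ l → ∀ p ∈ Γ, ‖p.1‖ ≤ C * ‖p.2 - l • p.1‖)
    (h0 : ∀ f, ∃ v, (v, f) ∈ Γ) (l : ℝ) (hl : 0 ≤ l) (g : X) : ∃ v, (v, l • v + g) ∈ Γ := by
  have step : ∀ l : ℝ, 0 ≤ l → (∀ g, ∃ v, (v, l • v + g) ∈ Γ) →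
      ∀ δ : ℝ, 0 ≤ δ → C * δ ≤ 1 / 2 → ∀ g, ∃ v, (v, (l + δ) • v + g) ∈ Γ := by
    intro l hl h δ hδ hCδ g
    choose R hR using h
    have hlip : ContractingWith (1/2) (fun v => R (g + δ • v)) := by
      refine ⟨by rw [← NNReal.coe_lt_coe]; norm_num, ?_⟩
      refine LipschitzWith.of_dist_le_mul fun v w => ?_
      have h1 := hest l hl _ (Γ.sub_mem (hR (g + δ • v)) (hR (g + δ • w)))
      have h2 : ((R (g + δ • v), l • R (g + δ • v) + (g + δ • v)) -
          (R (g + δ • w), l • R (g + δ • w) + (g + δ • w))).2 - l •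
          ((R (g + δ • v), l • R (g + δ • v) + (g + δ • v)) -
          (R (g + δ • w), l • R (g + δ • w) + (g + δ • w))).1 = δ • (v - w) := by
        simp only [Prod.snd_sub, Prod.fst_sub]
        module
      rw [h2, norm_smul, Real.norm_of_nonneg hδ] at h1
      rw [dist_eq_norm, dist_eq_norm]
      refine h1.trans ?_
      rw [← mul_assoc]
      refine mul_le_mul_of_nonneg_right ?_ (norm_nonneg _)
      simpa using hCδ
    refine ⟨hlip.fixedPoint, ?_⟩
    have h3 := hR (g + δ • hlip.fixedPoint)
    have h4 : R (g + δ • hlip.fixedPoint) = hlip.fixedPoint := hlip.fixedPoint_isFixedPt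
    rw [h4] at h3
    convert h3 using 2
    module
  have hind : ∀ n : ℕ, ∀ g, ∃ v, (v, (n * (1 / (2 * C))) • v + g) ∈ Γ := by
    intro n
    induction n with
    | zero => intro g; obtain ⟨v, hv⟩ := h0 g; exact ⟨v, by simpa using hv⟩
    | succ n ih =>
      intro g
      have := step (n * (1 / (2 * C))) (by positivity) ih (1 / (2 * C)) (by positivity)
        (by field_simp; rfl) g
      obtain ⟨v, hv⟩ := this
      refine ⟨v, ?_⟩
      convert hv using 4
      push_cast; ring
  set n := ⌊l / (1 / (2 * C))⌋₊ with hn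
  have hp : (0:ℝ) < 1 / (2 * C) := by positivity
  have h1 : n * (1 / (2 * C)) ≤ l := by
    rw [← le_div_iff₀ hp]; exact Nat.floor_le (by positivity)
  have h2 : l < (n + 1) * (1 / (2 * C)) := by
    rw [← div_lt_iff₀ hp]; exact Nat.lt_floor_add_one _
  have h3 := step (n * (1 / (2 * C))) (by positivity) (hind n) (l - n * (1 / (2 * C))) (by linarith)
    (by
      have : l - n * (1 / (2 * C)) ≤ 1 / (2 * C) := by linarith
      calc C * (l - n * (1 / (2 * C))) ≤ C * (1 / (2 * C)) := by gcongr
        _ = 1 / 2 := by field_simp) g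
  simpa using h3

lemma ph_abs0 {X : Type*} [NormedAddCommGroup X] [NormedSpace ℝ X] [CompleteSpace X]
    (Γ : Submodule ℝ (X × X)) (hcl : IsClosed (Γ : Set (X × X))) (C : ℝ) (hC : 0 < C)
    (hest : ∀ p ∈ Γ, ‖p.1‖ ≤ C * ‖p.2‖)
    (S : Set X) (hS : Dense S) (h0 : ∀ f ∈ S, ∃ v, (v, f) ∈ Γ) (f : X) : ∃ v, (v, f) ∈ Γ := by
  obtain ⟨fn, hfn, hlim⟩ := mem_closure_iff_seq_limit.1 (hS f)
  choose v hv using fun n => h0 (fn n) (hfn n)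
  have hc : CauchySeq v := by
    have := hlim.cauchySeq
    rw [Metric.cauchySeq_iff] at this ⊢
    intro ε hε
    obtain ⟨N, hN⟩ := this (ε / C) (by positivity)
    refine ⟨N, fun m hm n hn => ?_⟩
    have h1 := hest _ (Γ.sub_mem (hv m) (hv n))
    have h2 := hN m hm n hn
    rw [dist_eq_norm] at h2 ⊢
    refine h1.trans_lt ?_
    rw [lt_div_iff₀ hC, mul_comm] at h2
    exact h2
  obtain ⟨w, hw⟩ := cauchySeq_tendsto_of_complete hc
  exact ⟨w, hcl.mem_of_tendsto (hw.prodMk_nhds hlim) (Filter.Eventually.of_forall hv)⟩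

/-- second derivative trace -/
noncomputable def phTr (B : E →L[ℝ] E →L[ℝ] ℝ) : ℝ :=
  ∑ i : Fin 3, B (EuclideanSpace.single i 1) (EuclideanSpace.single i 1)

lemma ph_expand (y : E) : y = y 0 • EuclideanSpace.single 0 (1:ℝ) +
    y 1 • EuclideanSpace.single 1 (1:ℝ) + y 2 • EuclideanSpace.single 2 (1:ℝ) := by
  ext k; fin_cases k <;> simp

lemma ph_alg (B : E →L[ℝ] E →L[ℝ] ℝ) (l : E →L[ℝ] ℝ) (r : ℝ) (y : E) (hy : ‖y‖ = 1) :
    (r * B (phA 0 1 y) (phA 0 1 y) + l (phA 0 1 (phA 0 1 y)))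
    + (r * B (phA 0 2 y) (phA 0 2 y) + l (phA 0 2 (phA 0 2 y)))
    + (r * B (phA 1 2 y) (phA 1 2 y) + l (phA 1 2 (phA 1 2 y)))
    = r * phTr B - (r * B y y + 2 * l y) := by
  have h1 : y 0 ^ 2 + y 1 ^ 2 + y 2 ^ 2 = 1 := by
    have := EuclideanSpace.norm_sq_eq y
    rw [hy] at this
    simp only [Fin.sum_univ_three, Real.norm_eq_abs, sq_abs] at this
    linarith
  have hB : B y y = B (y 0 • EuclideanSpace.single 0 (1:ℝ) +
    y 1 • EuclideanSpace.single 1 (1:ℝ) + y 2 • EuclideanSpace.single 2 (1:ℝ)) (y 0 • EuclideanSpace.single 0 (1:ℝ) +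
    y 1 • EuclideanSpace.single 1 (1:ℝ) + y 2 • EuclideanSpace.single 2 (1:ℝ)) := by
    rw [← ph_expand]
  have hl : l y = l (y 0 • EuclideanSpace.single 0 (1:ℝ) +
    y 1 • EuclideanSpace.single 1 (1:ℝ) + y 2 • EuclideanSpace.single 2 (1:ℝ)) := by
    rw [← ph_expand]
  rw [hB, hl]
  simp [phA_apply, phTr, Fin.sum_univ_three]
  set b0 := B (EuclideanSpace.single 0 1) (EuclideanSpace.single 0 1)
  set b1 := B (EuclideanSpace.single 1 1) (EuclideanSpace.single 1 1)
  set b2 := B (EuclideanSpace.single 2 1) (EuclideanSpace.single 2 1)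
  linear_combination r * (b0 + b1 + b2) * h1

lemma ph_identity (σ : Measure E) [IsProbabilityMeasure σ]
    (hs : σ.restrict (sphere 0 1) = σ) (hinv : ∀ L : E ≃ₗᵢ[ℝ] E, σ.map L = σ)
    {W : E → ℝ} (hW : ContDiff ℝ 2 W) (x : E) (r : ℝ) :
    r * ∫ y, fderiv ℝ (fderiv ℝ W) (x + r • y) y y ∂σ + 2 * ∫ y, fderiv ℝ W (x + r • y) y ∂σ
      = r * ∫ y, phTr (fderiv ℝ (fderiv ℝ W) (x + r • y)) ∂σ := by
  have h1 : ContDiff ℝ 1 (fderiv ℝ W) := hW.fderiv_right (by norm_num)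
  have hc1 : Continuous (fderiv ℝ W) := h1.continuous
  have hc2 : Continuous (fderiv ℝ (fderiv ℝ W)) := h1.continuous_fderiv one_ne_zero
  have hae : ∀ᵐ y ∂σ, y ∈ sphere (0 : E) 1 := by
    rw [← hs]; exact ae_restrict_mem isClosed_sphere.measurableSet
  have key : ∀ i j : Fin 3, i ≠ j → ∫ y, (r * fderiv ℝ (fderiv ℝ W) (x + r • y) (phA i j y) (phA i j y)
      + fderiv ℝ W (x + r • y) (phA i j (phA i j y))) ∂σ = 0 := by
    intro i j hij
    have hf : ContDiff ℝ 1 (fun y => fderiv ℝ W (x + r • y) (phA i j y)) := by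
      have : ContDiff ℝ 1 (fun y : E => fderiv ℝ W (x + r • y)) := h1.comp (by fun_prop)
      exact this.clm_apply (phA i j).contDiff
    rw [← ph_skew σ hs hinv i j hij hf]
    congr 1
    funext y
    have d1 : HasFDerivAt (fun y : E => x + r • y) (r • ContinuousLinearMap.id ℝ E) y :=
      ((hasFDerivAt_id y).const_smul r).const_add x
    have d2 := (((h1.differentiable one_ne_zero) (x + r • y)).hasFDerivAt).comp y d1
    have d3 := d2.clm_apply ((phA i j).hasFDerivAt (x := y))
    have d4 := d3.fderiv
    simp only [Function.comp_def] at d4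
    rw [d4]
    simp [add_comm]
  have hc : ∀ i j, Continuous (fun y => (r * fderiv ℝ (fderiv ℝ W) (x + r • y) (phA i j y) (phA i j y)
      + fderiv ℝ W (x + r • y) (phA i j (phA i j y)))) := by
    intro i j; fun_prop
  have i1 := fun i j => ph_integrable σ hs (hc i j)
  have e0 := key 0 1 (by decide)
  have e1 := key 0 2 (by decide)
  have e2 := key 1 2 (by decide)
  have hsum := integral_add ((i1 0 1).add (i1 0 2)) (i1 1 2)
  have hsum' := integral_add (i1 0 1) (i1 0 2)
  simp only [Pi.add_apply] at hsum hsum'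
  rw [hsum', e0, e1, e2] at hsum
  have hcT : Continuous (fun y => phTr (fderiv ℝ (fderiv ℝ W) (x + r • y))) := by
    unfold phTr; fun_prop
  have hcB : Continuous (fun y => fderiv ℝ (fderiv ℝ W) (x + r • y) y y) := by fun_prop
  have hcl : Continuous (fun y => fderiv ℝ W (x + r • y) y) := by fun_prop
  have iT := ph_integrable σ hs hcT
  have iB := ph_integrable σ hs hcB
  have il := ph_integrable σ hs hcl
  have : ∫ y, (r * phTr (fderiv ℝ (fderiv ℝ W) (x + r • y)) -
      (r * fderiv ℝ (fderiv ℝ W) (x + r • y) y y + 2 * fderiv ℝ W (x + r • y) y)) ∂σ = 0 := by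
    rw [← add_zero (0:ℝ), ← add_zero (0 + 0 : ℝ), ← hsum]
    apply integral_congr_ae
    filter_upwards [hae] with y hy
    rw [ph_alg _ _ r y (by simpa using hy)]
  have iS : Integrable (fun y => r * fderiv ℝ (fderiv ℝ W) (x + r • y) y y
      + 2 * fderiv ℝ W (x + r • y) y) σ := (iB.const_mul r).add (il.const_mul 2)
  rw [integral_sub (iT.const_mul r) iS,
    integral_add (iB.const_mul r) (il.const_mul 2)] at this
  simp only [integral_const_mul] at this
  linarith

noncomputable def phM (σ : Measure E) (v : E → ℝ) (x : E) (r : ℝ) : ℝ := ∫ y, v (x + r • y) ∂σ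

/-- weak formulation of `Δ v = F` in `D` -/
def phWk (σ : Measure E) (D : Set E) (v F : E → ℝ) : Prop :=
  ∀ x r, 0 < r → closedBall x r ⊆ D →
    r * phM σ v x r = r * v x + ∫ s in (0:ℝ)..r, (r - s) * (s * phM σ F x s)

lemma ph_core (σ : Measure E) [IsProbabilityMeasure σ]
    (hs : σ.restrict (sphere 0 1) = σ) (hinv : ∀ L : E ≃ₗᵢ[ℝ] E, σ.map L = σ)
    {W : E → ℝ} (hW : ContDiff ℝ 2 W) (x : E) (r : ℝ) :
    r * phM σ W x r = r * W x + ∫ s in (0:ℝ)..r,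
      (r - s) * (s * phM σ (fun z => phTr (fderiv ℝ (fderiv ℝ W) z)) x s) := by
  have h1 : ContDiff ℝ 1 (fderiv ℝ W) := hW.fderiv_right (by norm_num)
  have hc0 : Continuous W := hW.continuous
  have hc1 : Continuous (fderiv ℝ W) := h1.continuous
  have hc2 : Continuous (fderiv ℝ (fderiv ℝ W)) := h1.continuous_fderiv one_ne_zero
  have hl : ∀ (s : ℝ) (y : E), HasDerivAt (fun s : ℝ => x + s • y) y s := by
    intro s y
    simpa using ((hasDerivAt_id s).smul_const y).const_add x
  have d0 : ∀ s, HasDerivAt (phM σ W x) (∫ y, fderiv ℝ W (x + s • y) y ∂σ) s := by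
    intro s
    refine ph_hasDerivAt σ hs (Φ := fun s y => W (x + s • y))
      (Φ' := fun s y => fderiv ℝ W (x + s • y) y) ?_ ?_ ?_ s
    · simp only [Function.uncurry_def]; fun_prop
    · simp only [Function.uncurry_def]; fun_prop
    · intro s y
      exact ((hW.differentiable two_ne_zero) (x + s • y)).hasFDerivAt.comp_hasDerivAt s (hl s y)
  have d1 : ∀ s, HasDerivAt (fun s : ℝ => ∫ y, fderiv ℝ W (x + s • y) y ∂σ)
      (∫ y, fderiv ℝ (fderiv ℝ W) (x + s • y) y y ∂σ) s := by
    intro s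
    refine ph_hasDerivAt σ hs (Φ := fun s y => fderiv ℝ W (x + s • y) y)
      (Φ' := fun s y => fderiv ℝ (fderiv ℝ W) (x + s • y) y y) ?_ ?_ ?_ s
    · simp only [Function.uncurry_def]; fun_prop
    · simp only [Function.uncurry_def]; fun_prop
    · intro s y
      have := ((h1.differentiable one_ne_zero) (x + s • y)).hasFDerivAt.comp_hasDerivAt s (hl s y)
      have h2 := this.clm_apply (hasDerivAt_const s y)
      simpa using h2
  set T := fun z => phTr (fderiv ℝ (fderiv ℝ W) z) with hT
  have hTc : Continuous T := by rw [hT]; unfold phTr; fun_prop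
  have hMT : Continuous (phM σ T x) := by
    refine ph_cont_param σ hs (Φ := fun s y => T (x + s • y)) ?_
    simp only [Function.uncurry_def]; fun_prop
  have hk : ∀ s, HasDerivAt (fun s : ℝ => s * phM σ W x s +
      (r - s) * (phM σ W x s + s * ∫ y, fderiv ℝ W (x + s • y) y ∂σ))
      ((r - s) * (s * phM σ T x s)) s := by
    intro s
    have a1 := (hasDerivAt_id s).mul (d0 s)
    have a2 := (d0 s).add ((hasDerivAt_id s).mul (d1 s))
    have a3 := ((hasDerivAt_id s).const_sub r).mul a2
    have a4 := a1.add a3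
    refine a4.congr_deriv ?_
    have := ph_identity σ hs hinv hW x s
    simp only [phM, hT, id, Pi.add_apply, Pi.mul_apply]
    linear_combination (r - s) * this
  have hI := intervalIntegral.integral_eq_sub_of_hasDerivAt (a := 0) (b := r) (fun s _ => hk s)
    ((by fun_prop : Continuous fun s => (r - s) * (s * phM σ T x s)).intervalIntegrable _ _)
  rw [hI]
  simp [phM]

lemma ph_ae (σ : Measure E) (hs : σ.restrict (sphere 0 1) = σ) :
    ∀ᵐ y ∂σ, y ∈ sphere (0 : E) 1 := by
  rw [← hs]; exact ae_restrict_mem isClosed_sphere.measurableSet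

lemma phM_congr (σ : Measure E) (hs : σ.restrict (sphere 0 1) = σ) {v w : E → ℝ} {x : E} {s : ℝ}
    (hs0 : 0 ≤ s) (h : ∀ z ∈ closedBall x s, v z = w z) : phM σ v x s = phM σ w x s := by
  apply integral_congr_ae
  filter_upwards [ph_ae σ hs] with y hy
  apply h
  have : ‖y‖ = 1 := by simpa using hy
  simp [norm_smul, this, abs_of_nonneg hs0]

lemma phWk_congr {σ : Measure E} (hs : σ.restrict (sphere 0 1) = σ) {D : Set E}
    {v F v' F' : E → ℝ} (hv : ∀ z ∈ D, v z = v' z) (hF : ∀ z ∈ D, F z = F' z)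
    (h : phWk σ D v F) : phWk σ D v' F' := by
  intro x r hr hD
  have h1 := h x r hr hD
  rw [phM_congr σ hs hr.le (fun z hz => hv z (hD hz)), hv x (hD (mem_closedBall_self hr.le))] at h1
  rw [h1]
  congr 1
  apply intervalIntegral.integral_congr
  intro s hs'
  rw [Set.uIcc_of_le hr.le] at hs'
  simp only
  rw [phM_congr σ hs hs'.1 (fun z hz => hF z (hD (closedBall_subset_closedBall hs'.2 hz)))]

lemma ph_lap {W : E → ℝ} {z : E} (h : DifferentiableAt ℝ (fderiv ℝ W) z) :
    laplacian 3 W z = phTr (fderiv ℝ (fderiv ℝ W) z) := by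
  unfold laplacian phTr
  refine Finset.sum_congr rfl fun i _ => ?_
  have := h.hasFDerivAt.clm_apply (hasFDerivAt_const (EuclideanSpace.single i (1:ℝ)) z)
  rw [this.fderiv]
  simp

lemma ph_lap_congr {v w : E → ℝ} {z : E} (h : v =ᶠ[nhds z] w) :
    laplacian 3 v z = laplacian 3 w z := by
  unfold laplacian
  refine Finset.sum_congr rfl fun i _ => ?_
  have h2 : (fun y => fderiv ℝ v y (EuclideanSpace.single i 1)) =ᶠ[nhds z]
      (fun y => fderiv ℝ w y (EuclideanSpace.single i 1)) := by
    filter_upwards [h.fderiv (𝕜 := ℝ)] with y hy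
    rw [hy]
  rw [h2.fderiv_eq]

lemma ph_lap_cont {D : Set E} (hD : IsOpen D) {v : E → ℝ} (hv : ContDiffOn ℝ 2 v D) :
    ContinuousOn (laplacian 3 v) D := by
  have h1 : ContDiffOn ℝ 1 (fderiv ℝ v) D := hv.fderiv_of_isOpen hD (by norm_num)
  have h2 : ContinuousOn (fderiv ℝ (fderiv ℝ v)) D := h1.continuousOn_fderiv_of_isOpen hD (by norm_num)
  have h3 : ContinuousOn (fun z => phTr (fderiv ℝ (fderiv ℝ v) z)) D := by
    unfold phTr; fun_prop
  refine h3.congr fun z hz => ph_lap ?_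
  exact (h1.contDiffAt (hD.mem_nhds hz)).differentiableAt one_ne_zero

lemma ph_bump {D : Set E} (hD : IsOpen D) {v : E → ℝ} (hv : ContDiffOn ℝ 2 v D) {x : E} {r : ℝ}
    (hr : 0 < r) (hxD : closedBall x r ⊆ D) :
    ∃ W : E → ℝ, ContDiff ℝ 2 W ∧ ∀ z ∈ closedBall x r, W =ᶠ[nhds z] v := by
  obtain ⟨δ, hδ, hδD⟩ := (isCompact_closedBall x r).exists_thickening_subset_open hD hxD
  rw [thickening_closedBall hδ hr.le] at hδD
  let χ : ContDiffBump x := ⟨r + δ / 3, r + δ * 2 / 3, by positivity, by linarith⟩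
  have hχ : closedBall x χ.rOut ⊆ D := by
    refine subset_trans (closedBall_subset_ball ?_) hδD
    change r + δ * 2 / 3 < δ + r
    linarith
  have hW : ContDiff ℝ 2 (fun z => χ z * v z) := by
    rw [contDiff_iff_contDiffAt]
    intro z
    by_cases hz : z ∈ tsupport χ
    · have hz' : z ∈ closedBall x χ.rOut := by
        rw [← χ.tsupport_eq]
        exact hz
      exact χ.contDiff.contDiffAt.mul (hv.contDiffAt (hD.mem_nhds (hχ hz')))
    · rw [notMem_tsupport_iff_eventuallyEq] at hz
      refine (contDiffAt_const (c := (0:ℝ))).congr_of_eventuallyEq ?_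
      filter_upwards [hz] with y hy
      simp [hy]
  refine ⟨_, hW, ?_⟩
  intro z hz
  have : z ∈ ball x χ.rIn := by
    rw [mem_closedBall] at hz
    change dist z x < r + δ / 3
    linarith
  filter_upwards [isOpen_ball.mem_nhds this] with y hy
  rw [χ.one_of_mem_closedBall (ball_subset_closedBall hy), one_mul]

lemma phWk_of_C2 (σ : Measure E) [IsProbabilityMeasure σ]
    (hs : σ.restrict (sphere 0 1) = σ) (hinv : ∀ L : E ≃ₗᵢ[ℝ] E, σ.map L = σ)
    {D : Set E} (hD : IsOpen D) {v F : E → ℝ} (hv : ContDiffOn ℝ 2 v D)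
    (hF : ∀ z ∈ D, laplacian 3 v z = F z) : phWk σ D v F := by
  intro x r hr hxD
  obtain ⟨W, hW, heq⟩ := ph_bump hD hv hr hxD
  have h := ph_core σ hs hinv hW x r
  rw [phM_congr σ hs hr.le (fun z hz => (heq z hz).eq_of_nhds)] at h
  rw [h]
  congr 1
  · rw [(heq x (mem_closedBall_self hr.le)).eq_of_nhds]
  apply intervalIntegral.integral_congr
  intro s hs'
  rw [Set.uIcc_of_le hr.le] at hs'
  simp only
  rw [phM_congr σ hs hs'.1]
  intro z hz
  have hz' := closedBall_subset_closedBall hs'.2 hz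
  rw [← hF z (hxD hz'), ← ph_lap_congr (heq z hz'), ph_lap]
  exact ((hW.fderiv_right (m := 1) (by norm_num)).differentiable one_ne_zero) z

lemma ph_lap_sq (z : E) : laplacian 3 (fun z => ‖z‖ ^ 2) z = 6 := by
  have h1 : ∀ y : E, fderiv ℝ (fun z : E => ‖z‖ ^ 2) y = 2 • (innerSL ℝ y) := fun y => fderiv_norm_sq_apply y
  unfold laplacian
  have : ∀ i : Fin 3, fderiv ℝ (fun y => fderiv ℝ (fun z : E => ‖z‖ ^ 2) y (EuclideanSpace.single i 1)) z
      (EuclideanSpace.single i 1) = 2 := by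
    intro i
    have h2 : (fun y => fderiv ℝ (fun z : E => ‖z‖ ^ 2) y (EuclideanSpace.single i 1)) =
        fun y => (2 • (EuclideanSpace.proj i : E →L[ℝ] ℝ)) y := by
      funext y
      rw [h1]
      simp [EuclideanSpace.inner_single_right]
    rw [h2, ContinuousLinearMap.fderiv]
    simp
  rw [Finset.sum_congr rfl (fun i _ => this i)]
  norm_num

lemma ph_lap_exp (ξ z : E) : laplacian 3 (fun z => Real.exp (inner ℝ ξ z)) z
    = ‖ξ‖ ^ 2 * Real.exp (inner ℝ ξ z) := by
  have h0 : ∀ y : E, HasFDerivAt (fun z : E => Real.exp (inner ℝ ξ z))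
      (Real.exp (inner ℝ ξ y) • innerSL ℝ ξ) y := fun y =>
    ((innerSL ℝ ξ).hasFDerivAt (x := y)).exp
  have h1 : ∀ y : E, fderiv ℝ (fun z : E => Real.exp (inner ℝ ξ z)) y =
      Real.exp (inner ℝ ξ y) • innerSL ℝ ξ := fun y => (h0 y).fderiv
  unfold laplacian
  have : ∀ i : Fin 3, fderiv ℝ (fun y => fderiv ℝ (fun z : E => Real.exp (inner ℝ ξ z)) y
      (EuclideanSpace.single i 1)) z
      (EuclideanSpace.single i 1) = (ξ i) ^ 2 * Real.exp (inner ℝ ξ z) := by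
    intro i
    have h2 : (fun y => fderiv ℝ (fun z : E => Real.exp (inner ℝ ξ z)) y (EuclideanSpace.single i 1)) =
        fun y => Real.exp (inner ℝ ξ y) * ξ i := by
      funext y
      rw [h1]
      simp [EuclideanSpace.inner_single_right]
    rw [h2, ((h0 z).mul_const (ξ i)).fderiv]
    simp [EuclideanSpace.inner_single_right]
    ring
  simp_rw [this]
  rw [EuclideanSpace.norm_sq_eq, ← Finset.sum_mul]
  simp

lemma phM_cont (σ : Measure E) [IsProbabilityMeasure σ]
    (hs : σ.restrict (sphere 0 1) = σ) {v : E → ℝ} (hv : Continuous v) (x : E) :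
    Continuous (phM σ v x) := by
  refine ph_cont_param σ hs (Φ := fun s y => v (x + s • y)) ?_
  simp only [Function.uncurry_def]; fun_prop

lemma phM_lin (σ : Measure E) [IsProbabilityMeasure σ]
    (hs : σ.restrict (sphere 0 1) = σ) {v w : E → ℝ} (hv : Continuous v) (hw : Continuous w)
    (a b : ℝ) (x : E) (s : ℝ) :
    phM σ (fun z => a * v z + b * w z) x s = a * phM σ v x s + b * phM σ w x s := by
  unfold phM
  have h1 : Integrable (fun y => v (x + s • y)) σ := ph_integrable σ hs (by fun_prop)
  have h2 : Integrable (fun y => w (x + s • y)) σ := ph_integrable σ hs (by fun_prop)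
  rw [integral_add (h1.const_mul a) (h2.const_mul b), integral_const_mul, integral_const_mul]

lemma phM_mono (σ : Measure E) [IsProbabilityMeasure σ]
    (hs : σ.restrict (sphere 0 1) = σ) {v w : E → ℝ} (hv : Continuous v) (hw : Continuous w)
    {x : E} {s : ℝ} (hs0 : 0 ≤ s) (h : ∀ z ∈ closedBall x s, v z ≤ w z) :
    phM σ v x s ≤ phM σ w x s := by
  refine integral_mono_ae (ph_integrable σ hs (by fun_prop)) (ph_integrable σ hs (by fun_prop)) ?_
  filter_upwards [ph_ae σ hs] with y hy
  apply h
  have : ‖y‖ = 1 := by simpa using hy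
  simp [norm_smul, this, abs_of_nonneg hs0]

lemma phM_const (σ : Measure E) [IsProbabilityMeasure σ] (c : ℝ) (x : E) (s : ℝ) :
    phM σ (fun _ => c) x s = c := by
  simp [phM]

/-- residual -/
noncomputable def phRes (σ : Measure E) (v F : E → ℝ) (x : E) (r : ℝ) : ℝ :=
  r * phM σ v x r - r * v x - ∫ s in (0:ℝ)..r, (r - s) * (s * phM σ F x s)

lemma phWk_iff (σ : Measure E) (D : Set E) (v F : E → ℝ) : phWk σ D v F ↔
    ∀ x r, 0 < r → closedBall x r ⊆ D → phRes σ v F x r = 0 := by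
  unfold phWk phRes
  constructor
  · intro h x r hr hD
    rw [h x r hr hD]; ring
  · intro h x r hr hD
    linarith [h x r hr hD]

lemma phRes_lin (σ : Measure E) [IsProbabilityMeasure σ]
    (hs : σ.restrict (sphere 0 1) = σ) {v w F G : E → ℝ} (hv : Continuous v) (hw : Continuous w)
    (hF : Continuous F) (hG : Continuous G) (a b : ℝ) (x : E) (r : ℝ) :
    phRes σ (fun z => a * v z + b * w z) (fun z => a * F z + b * G z) x r =
      a * phRes σ v F x r + b * phRes σ w G x r := by
  unfold phRes
  have cF := phM_cont σ hs hF x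
  have cG := phM_cont σ hs hG x
  simp only [phM_lin σ hs hv hw, phM_lin σ hs hF hG]
  have : ∫ s in (0:ℝ)..r, (r - s) * (s * (a * phM σ F x s + b * phM σ G x s)) =
      a * (∫ s in (0:ℝ)..r, (r - s) * (s * phM σ F x s)) +
      b * (∫ s in (0:ℝ)..r, (r - s) * (s * phM σ G x s)) := by
    rw [← intervalIntegral.integral_const_mul, ← intervalIntegral.integral_const_mul,
      ← intervalIntegral.integral_add]
    · congr 1; funext s; ring
    · exact Continuous.intervalIntegrable (by fun_prop) _ _
    · exact Continuous.intervalIntegrable (by fun_prop) _ _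
  rw [this]
  ring

lemma phWk_lin {σ : Measure E} [IsProbabilityMeasure σ]
    (hs : σ.restrict (sphere 0 1) = σ) {D : Set E} {v w F G : E → ℝ} (hv : Continuous v)
    (hw : Continuous w) (hF : Continuous F) (hG : Continuous G) (a b : ℝ)
    (h1 : phWk σ D v F) (h2 : phWk σ D w G) :
    phWk σ D (fun z => a * v z + b * w z) (fun z => a * F z + b * G z) := by
  rw [phWk_iff] at *
  intro x r hr hD
  rw [phRes_lin σ hs hv hw hF hG, h1 x r hr hD, h2 x r hr hD]
  ring

lemma phM_abs (σ : Measure E) [IsProbabilityMeasure σ]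
    (hs : σ.restrict (sphere 0 1) = σ) {v : E → ℝ} (hv : Continuous v) {x : E} {s ε : ℝ}
    (hs0 : 0 ≤ s) (h : ∀ z ∈ closedBall x s, |v z| ≤ ε) : |phM σ v x s| ≤ ε := by
  rw [abs_le]
  constructor
  · rw [← phM_const σ (-ε) x s]
    exact phM_mono σ hs (by fun_prop) hv hs0 fun z hz => (abs_le.1 (h z hz)).1
  · rw [← phM_const σ ε x s]
    exact phM_mono σ hs hv (by fun_prop) hs0 fun z hz => (abs_le.1 (h z hz)).2

lemma phRes_bound (σ : Measure E) [IsProbabilityMeasure σ]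
    (hs : σ.restrict (sphere 0 1) = σ) {v F : E → ℝ} (hv : Continuous v) (hF : Continuous F)
    {x : E} {r ε : ℝ} (hr : 0 < r) (h1 : ∀ z ∈ closedBall x r, |v z| ≤ ε)
    (h2 : ∀ z ∈ closedBall x r, |F z| ≤ ε) : |phRes σ v F x r| ≤ ε * (2 * r + r ^ 3) := by
  have a1 := phM_abs σ hs hv hr.le h1
  have a2 := h1 x (mem_closedBall_self hr.le)
  have hε : 0 ≤ ε := (abs_nonneg _).trans a2
  have a3 : ‖∫ s in (0:ℝ)..r, (r - s) * (s * phM σ F x s)‖ ≤ (r * (r * ε)) * |r - 0| := by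
    apply intervalIntegral.norm_integral_le_of_norm_le_const
    intro s hs'
    rw [Set.uIoc_of_le hr.le] at hs'
    have a4 := phM_abs σ hs hF hs'.1.le fun z hz => h2 z (closedBall_subset_closedBall hs'.2 hz)
    rw [norm_mul, norm_mul, Real.norm_eq_abs, Real.norm_eq_abs, Real.norm_eq_abs,
      abs_of_nonneg (by linarith [hs'.2] : 0 ≤ r - s), abs_of_pos hs'.1]
    have := hs'.1
    have := hs'.2
    gcongr
    linarith
  rw [Real.norm_eq_abs, sub_zero, abs_of_pos hr] at a3
  unfold phRes
  have b1 : |r * phM σ v x r| ≤ r * ε := by rw [abs_mul, abs_of_pos hr]; gcongr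
  have b2 : |r * v x| ≤ r * ε := by rw [abs_mul, abs_of_pos hr]; gcongr
  calc _ ≤ |r * phM σ v x r| + |r * v x| + |∫ s in (0:ℝ)..r, (r - s) * (s * phM σ F x s)| := by
        refine (abs_sub _ _).trans ?_
        gcongr
        exact abs_sub _ _
    _ ≤ r * ε + r * ε + (r * (r * ε)) * r := by gcongr
    _ = _ := by ring

lemma phWk_closed {σ : Measure E} [IsProbabilityMeasure σ]
    (hs : σ.restrict (sphere 0 1) = σ) {D : Set E} {v F : E → ℝ} (hv : Continuous v)
    (hF : Continuous F) (h : ∀ ε > 0, ∃ w G : E → ℝ, Continuous w ∧ Continuous G ∧ phWk σ D w G ∧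
      (∀ z ∈ D, |v z - w z| ≤ ε) ∧ (∀ z ∈ D, |F z - G z| ≤ ε)) : phWk σ D v F := by
  rw [phWk_iff]
  intro x r hr hD
  have hp : 0 < 2 * r + r ^ 3 := by positivity
  rw [← abs_nonpos_iff]
  apply le_of_forall_pos_le_add
  intro ε hε
  obtain ⟨w, G, hw, hG, hWk, h1, h2⟩ := h (ε / (2 * r + r ^ 3)) (by positivity)
  rw [phWk_iff] at hWk
  have h3 := phRes_lin σ hs hv hw hF hG 1 (-1) x r
  rw [hWk x r hr hD] at h3
  have h4 := phRes_bound σ hs (v := fun z => 1 * v z + -1 * w z) (F := fun z => 1 * F z + -1 * G z)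
    (by fun_prop) (by fun_prop) (x := x) hr
    (fun z hz => by have := h1 z (hD hz); rwa [one_mul, neg_one_mul, ← sub_eq_add_neg])
    (fun z hz => by have := h2 z (hD hz); rwa [one_mul, neg_one_mul, ← sub_eq_add_neg])
  rw [h3] at h4
  rw [div_mul_cancel₀ _ hp.ne'] at h4
  simpa using h4

lemma ph_max {σ : Measure E} [IsProbabilityMeasure σ]
    (hs : σ.restrict (sphere 0 1) = σ) {D : Set E} (hD : IsOpen D) {e F : E → ℝ} (he : Continuous e)
    (hF : Continuous F) (h : phWk σ D e F) {x : E} (hx : x ∈ D) (hmax : ∀ z ∈ D, e z ≤ e x) :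
    F x ≤ 0 := by
  by_contra! hpos
  have hU : IsOpen (D ∩ {z | F x / 2 < F z}) := hD.inter (isOpen_lt continuous_const hF)
  obtain ⟨r, hr, hrU⟩ := nhds_basis_closedBall.mem_iff.1 (hU.mem_nhds (x := x) ⟨hx, by simp; linarith⟩)
  have h1 := h x r hr (fun z hz => (hrU hz).1)
  have h2 : phM σ e x r ≤ e x := by
    rw [← phM_const σ (e x) x r]
    exact phM_mono σ hs he (by fun_prop) hr.le fun z hz => hmax z (hrU hz).1
  have cF := phM_cont σ hs hF x
  have h3 : 0 < ∫ s in (0:ℝ)..r, (r - s) * (s * phM σ F x s) := by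
    apply intervalIntegral.intervalIntegral_pos_of_pos_on
    · exact Continuous.intervalIntegrable (by fun_prop) _ _
    · intro s hs'
      have : F x / 2 ≤ phM σ F x s := by
        rw [← phM_const σ (F x / 2) x s]
        exact phM_mono σ hs (by fun_prop) hF hs'.1.le fun z hz =>
          (hrU (closedBall_subset_closedBall hs'.2.le hz)).2.le
      have h4 : 0 < phM σ F x s := by linarith
      have h5 : 0 < r - s := by linarith [hs'.2]
      have := hs'.1
      positivity
    · exact hr
  nlinarith

lemma ph_est1 {σ : Measure E} [IsProbabilityMeasure σ]
    (hs : σ.restrict (sphere 0 1) = σ) (hinv : ∀ L : E ≃ₗᵢ[ℝ] E, σ.map L = σ)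
    {D : Set E} (hD : IsOpen D) {R : ℝ} (hR : 0 < R) (hDR : closure D ⊆ closedBall 0 R)
    {v F : E → ℝ} (hv : Continuous v) (hF : Continuous F) (h : phWk σ D v F)
    (hfr : ∀ z ∈ frontier D, v z = 0) {l A : ℝ} (hl : 0 ≤ l) (hA : 0 ≤ A)
    (hb : ∀ z ∈ D, -A ≤ F z - l * v z) : ∀ z ∈ closure D, v z ≤ R ^ 2 / 6 * A := by
  intro z₁ hz₁
  apply le_of_forall_pos_le_add
  intro ε' hε'
  set ε := ε' * 6 / R ^ 2 with hε
  have hεp : 0 < ε := by positivity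
  have hεR : R ^ 2 / 6 * ε = ε' := by rw [hε]; field_simp
  have hq : phWk σ D (fun z => ‖z‖ ^ 2) (fun _ => 6) :=
    phWk_of_C2 σ hs hinv hD (contDiff_norm_sq ℝ).contDiffOn fun z _ => ph_lap_sq z
  have hc : phWk σ D (fun _ => 1) (fun _ => 0) :=
    phWk_of_C2 σ hs hinv hD contDiff_const.contDiffOn fun z _ => by simp [laplacian]
  have h1 := phWk_lin hs (by fun_prop) (by fun_prop) (by fun_prop) (by fun_prop)
    ((A + ε) / 6) (-(A + ε) / 6 * R ^ 2) hq hc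
  have h2 := phWk_lin hs hv (by fun_prop) hF (by fun_prop) 1 1 h h1
  set e : E → ℝ := fun z => 1 * v z + 1 * ((A + ε) / 6 * ‖z‖ ^ 2 + -(A + ε) / 6 * R ^ 2 * 1) with he
  have hce : Continuous e := by rw [he]; fun_prop
  have hK : IsCompact (closure D) := (isCompact_closedBall (0:E) R).of_isClosed_subset isClosed_closure hDR
  obtain ⟨x, hx, hmax⟩ := hK.exists_isMaxOn ⟨z₁, hz₁⟩ hce.continuousOn
  have hqn : ∀ z ∈ closure D, ‖z‖ ^ 2 ≤ R ^ 2 := by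
    intro z hz
    have : ‖z‖ ≤ R := by simpa using hDR hz
    gcongr
  have hex : e x ≤ 0 := by
    by_contra! hpos
    have hvx : 0 < v x := by
      have := hqn x hx
      simp only [he] at hpos
      nlinarith
    have hxD : x ∈ D := by
      by_contra hxD
      have : x ∈ frontier D := by rw [hD.frontier_eq]; exact ⟨hx, hxD⟩
      rw [hfr x this] at hvx
      exact lt_irrefl _ hvx
    have h3 := ph_max hs hD hce (by fun_prop) h2 hxD fun z hz => hmax (subset_closure hz)
    have h4 := hb x hxD
    have h5 : 0 ≤ l * v x := by positivity
    linarith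
  have h6 : e z₁ ≤ e x := hmax hz₁
  have h7 := h6.trans hex
  simp only [he] at h7
  have : 0 ≤ (A + ε) / 6 * ‖z₁‖ ^ 2 := by positivity
  nlinarith

lemma ph_est {σ : Measure E} [IsProbabilityMeasure σ]
    (hs : σ.restrict (sphere 0 1) = σ) (hinv : ∀ L : E ≃ₗᵢ[ℝ] E, σ.map L = σ)
    {D : Set E} (hD : IsOpen D) {R : ℝ} (hR : 0 < R) (hDR : closure D ⊆ closedBall 0 R)
    {v F : E → ℝ} (hv : Continuous v) (hF : Continuous F) (h : phWk σ D v F)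
    (hfr : ∀ z ∈ frontier D, v z = 0) {l A : ℝ} (hl : 0 ≤ l) (hA : 0 ≤ A)
    (hb : ∀ z ∈ D, |F z - l * v z| ≤ A) : ∀ z ∈ closure D, |v z| ≤ R ^ 2 / 6 * A := by
  intro z hz
  rw [abs_le]
  constructor
  · have h1 := phWk_lin hs hv hv hF hF (-1) 0 h h
    have := ph_est1 hs hinv hD hR hDR (by fun_prop) (by fun_prop) h1
      (fun z hz => by simp [hfr z hz]) hl hA (fun z hz => by
        have := (abs_le.1 (hb z hz)).2
        linarith) z hz
    linarith
  · exact ph_est1 hs hinv hD hR hDR hv hF h hfr hl hA (fun z hz => (abs_le.1 (hb z hz)).1) z hz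

lemma ph_tietze {K : Set E} (hK : IsClosed K) (f : C(K, ℝ)) : ∃ g : C(E, ℝ), g.restrict K = f :=
  ContinuousMap.exists_restrict_eq hK f

noncomputable def phExt (D : Set E) (f : C(closure D, ℝ)) : C(E, ℝ) :=
  Classical.choose (ph_tietze isClosed_closure f)

lemma phExt_eq (D : Set E) (f : C(closure D, ℝ)) (z : E) (hz : z ∈ closure D) :
    phExt D f z = f ⟨z, hz⟩ := by
  have := Classical.choose_spec (ph_tietze isClosed_closure f)
  exact DFunLike.congr_fun this ⟨z, hz⟩

/-- pairs `(v, F)` with `Δ v = F` weakly and `v = 0` on the boundary -/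
noncomputable def phΓ (σ : Measure E) [IsProbabilityMeasure σ]
    (hs : σ.restrict (sphere 0 1) = σ) (D : Set E) :
    Submodule ℝ (C(closure D, ℝ) × C(closure D, ℝ)) where
  carrier := {p | (∀ z : closure D, z.1 ∈ frontier D → p.1 z = 0) ∧
    phWk σ D (phExt D p.1) (phExt D p.2)}
  add_mem' := by
    rintro p q ⟨hp1, hp2⟩ ⟨hq1, hq2⟩
    refine ⟨fun z hz => by simp [hp1 z hz, hq1 z hz], ?_⟩
    have := phWk_lin hs (by fun_prop) (by fun_prop) (by fun_prop) (by fun_prop) 1 1 hp2 hq2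
    refine phWk_congr hs ?_ ?_ this <;>
    · intro z hz
      simp [phExt_eq D _ z (subset_closure hz)]
  zero_mem' := by
    refine ⟨fun z hz => by simp, ?_⟩
    have : phWk σ D (fun _ => 0) (fun _ => 0) := by
      intro x r hr hD
      simp [phM]
    refine phWk_congr hs ?_ ?_ this <;>
    · intro z hz
      simp [phExt_eq D _ z (subset_closure hz)]
  smul_mem' := by
    rintro c p ⟨hp1, hp2⟩
    refine ⟨fun z hz => by simp [hp1 z hz], ?_⟩
    have := phWk_lin hs (by fun_prop) (by fun_prop) (by fun_prop) (by fun_prop) c 0 hp2 hp2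
    refine phWk_congr hs ?_ ?_ this <;>
    · intro z hz
      simp [phExt_eq D _ z (subset_closure hz)]

lemma phΓ_closed (σ : Measure E) [IsProbabilityMeasure σ]
    (hs : σ.restrict (sphere 0 1) = σ) (D : Set E) [CompactSpace (closure D)] :
    IsClosed (phΓ σ hs D : Set (C(closure D, ℝ) × C(closure D, ℝ))) := by
  rw [← isSeqClosed_iff_isClosed]
  intro p q hp hlim
  have h1 : Filter.Tendsto (fun n => (p n).1) Filter.atTop (nhds q.1) := hlim.fst_nhds
  have h2 : Filter.Tendsto (fun n => (p n).2) Filter.atTop (nhds q.2) := hlim.snd_nhds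
  refine ⟨fun z hz => ?_, ?_⟩
  · have h3 : Filter.Tendsto (fun n => (p n).1 z) Filter.atTop (nhds (q.1 z)) :=
      ((by fun_prop : Continuous fun k : C(closure D, ℝ) => k z).tendsto q.1).comp h1
    have h4 : (fun n => (p n).1 z) = fun _ => (0:ℝ) := funext fun n => (hp n).1 z hz
    rw [h4] at h3
    exact tendsto_nhds_unique h3 tendsto_const_nhds |>.symm ▸ rfl
  · refine phWk_closed hs (by fun_prop) (by fun_prop) fun ε hε => ?_
    rw [Metric.tendsto_atTop] at h1 h2
    obtain ⟨N1, hN1⟩ := h1 ε hε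
    obtain ⟨N2, hN2⟩ := h2 ε hε
    have a1 := hN1 (max N1 N2) (le_max_left _ _)
    have a2 := hN2 (max N1 N2) (le_max_right _ _)
    refine ⟨_, _, by fun_prop, by fun_prop, (hp (max N1 N2)).2, ?_, ?_⟩
    · intro z hz
      rw [phExt_eq D _ z (subset_closure hz), phExt_eq D _ z (subset_closure hz), abs_sub_comm,
        ← Real.dist_eq]
      exact (ContinuousMap.dist_apply_le_dist _).trans a1.le
    · intro z hz
      rw [phExt_eq D _ z (subset_closure hz), phExt_eq D _ z (subset_closure hz), abs_sub_comm,
        ← Real.dist_eq]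
      exact (ContinuousMap.dist_apply_le_dist _).trans a2.le

/-- exponentials -/
noncomputable def phExp (D : Set E) (ξ : E) : C(closure D, ℝ) :=
  ⟨fun z => Real.exp (inner ℝ ξ z.1), by fun_prop⟩

lemma phExp_dense (D : Set E) [CompactSpace (closure D)] :
    Dense (Submodule.span ℝ (Set.range (phExp D)) : Set C(closure D, ℝ)) := by
  have h1 : Subalgebra.toSubmodule (Algebra.adjoin ℝ (Set.range (phExp D))) =
      Submodule.span ℝ (Set.range (phExp D)) := by
    apply Algebra.adjoin_eq_span_of_subset
    refine subset_trans ?_ Submodule.subset_span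
    intro f hf
    refine Submonoid.closure_induction (fun _ h => h) ?_ ?_ hf
    · exact ⟨0, by ext z; simp [phExp]⟩
    · rintro _ _ _ _ ⟨a, rfl⟩ ⟨b, rfl⟩
      exact ⟨a + b, by ext z; simp [phExp, inner_add_left, Real.exp_add]⟩
  have h2 := ContinuousMap.subalgebra_topologicalClosure_eq_top_of_separatesPoints
    (Algebra.adjoin ℝ (Set.range (phExp D))) (by
      intro a b hab
      refine ⟨_, ⟨phExp D (a.1 - b.1), Algebra.subset_adjoin ⟨_, rfl⟩, rfl⟩, ?_⟩
      intro h
      simp only [phExp, ContinuousMap.coe_mk, Real.exp_eq_exp] at h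
      rw [← sub_eq_zero, ← inner_sub_right, inner_self_eq_zero, sub_eq_zero] at h
      exact hab (Subtype.ext h))
  have h3 : (Submodule.span ℝ (Set.range (phExp D)) : Set C(closure D, ℝ)) =
      (Algebra.adjoin ℝ (Set.range (phExp D)) : Set C(closure D, ℝ)) := by
    rw [← h1]; rfl
  rw [h3, dense_iff_closure_eq, ← Subalgebra.topologicalClosure_coe, h2]
  rfl

def phHyp (D : Set E) : Prop := ∀ f : EuclideanSpace ℝ (Fin 3) → ℝ, ContinuousOn f (frontier D) →
      ∃ w : EuclideanSpace ℝ (Fin 3) → ℝ, ContinuousOn w (closure D) ∧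
        ContDiffOn ℝ 2 w D ∧ (∀ x ∈ D, laplacian 3 w x = 0) ∧
        Set.EqOn w f (frontier D)

lemma ph_harm (σ : Measure E) [IsProbabilityMeasure σ]
    (hs : σ.restrict (sphere 0 1) = σ) (hinv : ∀ L : E ≃ₗᵢ[ℝ] E, σ.map L = σ)
    {D : Set E} (hD : IsOpen D) (hDir : phHyp D) (f : C(E, ℝ)) :
    ∃ w : C(E, ℝ), phWk σ D w (fun _ => 0) ∧ ∀ z ∈ frontier D, w z = f z := by
  obtain ⟨w, hw1, hw2, hw3, hw4⟩ := hDir f f.continuous.continuousOn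
  obtain ⟨g, hg⟩ := ph_tietze isClosed_closure (⟨(closure D).domRestrict w, hw1.domRestrict⟩ : C(closure D, ℝ))
  have hg' : ∀ z ∈ closure D, g z = w z := fun z hz => DFunLike.congr_fun hg ⟨z, hz⟩
  refine ⟨g, ?_, fun z hz => ?_⟩
  · exact phWk_congr hs (fun z hz => (hg' z (subset_closure hz)).symm) (fun _ _ => rfl)
      (phWk_of_C2 σ hs hinv hD hw2 (F := fun _ => 0) hw3)
  · rw [hg' z (frontier_subset_closure hz), hw4 hz]

lemma ph_mem (σ : Measure E) [IsProbabilityMeasure σ]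
    (hs : σ.restrict (sphere 0 1) = σ) (hinv : ∀ L : E ≃ₗᵢ[ℝ] E, σ.map L = σ)
    {D : Set E} (hD : IsOpen D) (hDir : phHyp D) {p F : E → ℝ} (hp : Continuous p)
    (hF : Continuous F) (h : phWk σ D p F) (f : C(closure D, ℝ))
    (hf : ∀ z : closure D, f z = F z.1) : ∃ v, (v, f) ∈ phΓ σ hs D := by
  obtain ⟨w, hw1, hw2⟩ := ph_harm σ hs hinv hD hDir ⟨p, hp⟩
  have h1 := phWk_lin hs hp w.continuous hF continuous_const 1 (-1) h hw1
  refine ⟨⟨fun z => 1 * p z + -1 * w z, by fun_prop⟩, ?_, ?_⟩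
  · intro z hz
    have := hw2 z hz
    simp only [ContinuousMap.coe_mk] at this ⊢
    rw [this]; ring
  · refine phWk_congr hs ?_ ?_ h1
    · intro z hz
      rw [phExt_eq D _ z (subset_closure hz)]
      rfl
    · intro z hz
      rw [phExt_eq D _ z (subset_closure hz), hf]
      simp

lemma ph_exist (σ : Measure E) [IsProbabilityMeasure σ]
    (hs : σ.restrict (sphere 0 1) = σ) (hinv : ∀ L : E ≃ₗᵢ[ℝ] E, σ.map L = σ)
    {D : Set E} (hD : IsOpen D) (hDb : Bornology.IsBounded D) (hDir : phHyp D) (f : C(E, ℝ))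
    (l : ℝ) (hl : 0 ≤ l) :
    ∃ v : C(E, ℝ), phWk σ D v (fun z => l * v z) ∧ ∀ z ∈ frontier D, v z = f z := by
  obtain ⟨R, hR, hDR⟩ : ∃ R > 0, closure D ⊆ closedBall (0:E) R := by
    obtain ⟨R, hR⟩ := hDb.closure.subset_closedBall (0:E)
    exact ⟨max R 1, by positivity, hR.trans (closedBall_subset_closedBall (le_max_left _ _))⟩
  have hK : IsCompact (closure D) := hDb.isCompact_closure
  haveI : CompactSpace (closure D) := isCompact_iff_compactSpace.1 hK
  have hest : ∀ l : ℝ, 0 ≤ l → ∀ p ∈ phΓ σ hs D, ‖p.1‖ ≤ R ^ 2 / 6 * ‖p.2 - l • p.1‖ := by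
    rintro l hl p ⟨hp1, hp2⟩
    rw [ContinuousMap.norm_le _ (by positivity)]
    intro z
    have := ph_est hs hinv hD hR hDR (by fun_prop) (by fun_prop) hp2 (fun z hz => by
      rw [phExt_eq D _ z (frontier_subset_closure hz)]
      exact hp1 _ hz) hl (norm_nonneg (p.2 - l • p.1)) (fun z hz => by
      rw [phExt_eq D _ z (subset_closure hz), phExt_eq D _ z (subset_closure hz)]
      exact (p.2 - l • p.1).norm_coe_le_norm ⟨z, subset_closure hz⟩) z.1 z.2
    rw [phExt_eq D _ z.1 z.2] at this
    exact this
  have h0 : ∀ g, ∃ v, (v, g) ∈ phΓ σ hs D := by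
    refine ph_abs0 _ (phΓ_closed σ hs D) (R ^ 2 / 6) (by positivity)
      (fun p hp => by simpa using hest 0 le_rfl p hp) _ (phExp_dense D) ?_
    intro g hg
    induction hg using Submodule.span_induction with
    | mem g hg =>
      obtain ⟨ξ, rfl⟩ := hg
      by_cases hξ : ξ = 0
      · have hq : phWk σ D (fun z => ‖z‖ ^ 2) (fun _ => 6) :=
          phWk_of_C2 σ hs hinv hD (contDiff_norm_sq ℝ).contDiffOn fun z _ => ph_lap_sq z
        have := phWk_lin hs (by fun_prop) (by fun_prop) (by fun_prop) (by fun_prop) (1/6) 0 hq hq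
        refine ph_mem σ hs hinv hD hDir (by fun_prop) (by fun_prop) this _ fun z => ?_
        simp [phExp, hξ]
      · have hq : phWk σ D (fun z => Real.exp (inner ℝ ξ z))
            (fun z => ‖ξ‖ ^ 2 * Real.exp (inner ℝ ξ z)) :=
          phWk_of_C2 σ hs hinv hD (Real.contDiff_exp.comp (innerSL ℝ ξ).contDiff).contDiffOn
            fun z _ => ph_lap_exp ξ z
        have := phWk_lin hs (by fun_prop) (by fun_prop) (by fun_prop) (by fun_prop)
          (1/‖ξ‖^2) 0 hq hq
        refine ph_mem σ hs hinv hD hDir (by fun_prop) (by fun_prop) this _ fun z => ?_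
        have : ‖ξ‖ ≠ 0 := by simpa using hξ
        simp [phExp]
        field_simp
    | zero => exact ⟨0, Submodule.zero_mem _⟩
    | add a b _ _ ha hb =>
      obtain ⟨v, hv⟩ := ha
      obtain ⟨w, hw⟩ := hb
      exact ⟨v + w, Submodule.add_mem _ hv hw⟩
    | smul c a _ ha =>
      obtain ⟨v, hv⟩ := ha
      exact ⟨c • v, Submodule.smul_mem _ c hv⟩
  obtain ⟨w, hw1, hw2⟩ := ph_harm σ hs hinv hD hDir f
  obtain ⟨v, hv1, hv2⟩ := ph_abs (phΓ σ hs D) (R ^ 2 / 6) (by positivity) hest h0 l hl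
    (l • w.restrict (closure D))
  refine ⟨phExt D v + w, ?_, ?_⟩
  · have := phWk_lin hs (by fun_prop) (by fun_prop) (by fun_prop) (by fun_prop) 1 1 hv2 hw1
    refine phWk_congr hs (fun z hz => by simp) (fun z hz => ?_) this
    simp only [ContinuousMap.add_apply]
    rw [phExt_eq D _ z (subset_closure hz), phExt_eq D _ z (subset_closure hz)]
    simp
    ring
  · intro z hz
    have := hv1 ⟨z, frontier_subset_closure hz⟩ hz
    simp only [ContinuousMap.add_apply]
    rw [phExt_eq D _ z (frontier_subset_closure hz), hw2 z hz, this, zero_add]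

lemma ph_volterra {g : ℝ → ℝ} (hg : Continuous g) {a μ R : ℝ} (hμ : 0 < μ) (hR : 0 ≤ R)
    (h : ∀ r ∈ Set.Icc 0 R, g r = r * a + ∫ s in (0:ℝ)..r, (r - s) * (μ ^ 2 * g s)) :
    μ * g R = a * Real.sinh (μ * R) := by
  set I0 : ℝ → ℝ := fun r => ∫ s in (0:ℝ)..r, g s with hI0
  set I1 : ℝ → ℝ := fun r => ∫ s in (0:ℝ)..r, s * g s with hI1
  have d0 : ∀ r, HasDerivAt I0 (g r) r := fun r => hg.integral_hasStrictDerivAt 0 r |>.hasDerivAt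
  have d1 : ∀ r, HasDerivAt I1 (r * g r) r := fun r =>
    (by fun_prop : Continuous fun s => s * g s).integral_hasStrictDerivAt 0 r |>.hasDerivAt
  set G : ℝ → ℝ := fun r => r * a + μ ^ 2 * (r * I0 r - I1 r) with hG
  set P : ℝ → ℝ := fun r => a + μ ^ 2 * I0 r with hP
  have hGg : ∀ r ∈ Set.Icc 0 R, g r = G r := by
    intro r hr
    rw [h r hr]
    simp only [hG, hI0, hI1]
    congr 1
    rw [← intervalIntegral.integral_const_mul, ← intervalIntegral.integral_sub,
      ← intervalIntegral.integral_const_mul]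
    · congr 1; funext s; ring
    · exact Continuous.intervalIntegrable (by fun_prop) _ _
    · exact Continuous.intervalIntegrable (by fun_prop) _ _
  have dG : ∀ r, HasDerivAt G (P r) r := by
    intro r
    have := ((hasDerivAt_id r).mul_const a).add
      ((((hasDerivAt_id r).mul (d0 r)).sub (d1 r)).const_mul (μ ^ 2))
    refine this.congr_deriv ?_
    simp [hP]
  have dP : ∀ r, HasDerivAt P (μ ^ 2 * g r) r := fun r => ((d0 r).const_mul (μ ^ 2)).const_add a
  have key : ∀ c : ℝ, c ^ 2 = μ ^ 2 → (P R + c * G R) * Real.exp (-c * R) = a := by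
    intro c hc
    have hd : ∀ r, HasDerivAt (fun r => (P r + c * G r) * Real.exp (-c * r))
        (Real.exp (-c * r) * (μ ^ 2 * (g r - G r))) r := by
      intro r
      have e1 : HasDerivAt (fun r : ℝ => Real.exp (-c * r)) (Real.exp (-c * r) * (-c * 1)) r :=
        ((hasDerivAt_id r).const_mul (-c)).exp
      have := ((dP r).add ((dG r).const_mul c)).mul e1
      refine this.congr_deriv ?_
      simp only [Pi.add_apply]
      linear_combination (-Real.exp (-c * r) * G r) * hc
    have hconst := constant_of_has_deriv_right_zero (a := 0) (b := R)
      (f := fun r => (P r + c * G r) * Real.exp (-c * r))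
      (fun r _ => (hd r).continuousAt.continuousWithinAt)
      (fun r hr => by
        have := (hd r).hasDerivWithinAt (s := Set.Ici r)
        rw [hGg r ⟨hr.1, hr.2.le⟩, sub_self, mul_zero, mul_zero] at this
        exact this) R ⟨hR, le_rfl⟩
    rw [hconst]
    simp [hP, hG, hI0, hI1]
  have k1 := key μ rfl
  have k2 := key (-μ) (by ring)
  have e1 : Real.exp (-μ * R) * Real.exp (μ * R) = 1 := by rw [← Real.exp_add]; simp
  rw [neg_neg] at k2
  rw [hGg R ⟨hR, le_rfl⟩, Real.sinh_eq, ← neg_mul]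
  linear_combination (Real.exp (μ * R) / 2) * k1 - (Real.exp (-μ * R) / 2) * k2 - (μ * G R) * e1

lemma ph_mvp (σ : Measure E) [IsProbabilityMeasure σ]
    (hs : σ.restrict (sphere 0 1) = σ) {D : Set E} {v : E → ℝ} (hv : Continuous v) {μ : ℝ}
    (hμ : 0 < μ) (h : phWk σ D v (fun z => μ ^ 2 * v z)) {x : E} {R : ℝ} (hR : 0 < R)
    (hxD : closedBall x R ⊆ D) :
    phM σ v x R = Real.sinh (μ * R) / (μ * R) * v x := by
  have hc := phM_cont σ hs hv x
  have := ph_volterra (g := fun r => r * phM σ v x r) (by fun_prop) (a := v x) hμ hR.le (by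
    intro r hr
    rcases hr.1.eq_or_lt with h0 | h0
    · subst h0; simp
    · rw [h x r h0 ((closedBall_subset_closedBall hr.2).trans hxD)]
      congr 1
      congr 1
      funext s
      have : phM σ (fun z => μ ^ 2 * v z) x s = μ ^ 2 * phM σ v x s := by
        simp [phM, integral_const_mul]
      rw [this]; ring)
  field_simp
  linear_combination this

lemma ph_final (σ : Measure E) [IsProbabilityMeasure σ]
    (hs : σ.restrict (sphere 0 1) = σ) (hinv : ∀ L : E ≃ₗᵢ[ℝ] E, σ.map L = σ)
    {D : Set E} (hD : IsOpen D) (hDb : Bornology.IsBounded D) (hDir : phHyp D)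
    (u : E → ℝ) (hu_cont : ContinuousOn u (closure D)) (hu_C2 : ContDiffOn ℝ 2 u D)
    (μ : ℝ) (hμ : 0 < μ)
    (hmean : ∀ x ∈ D, ∃ r > (0 : ℝ), closedBall x r ⊆ D ∧
      phM σ u x r = (Real.sinh (μ * r) / (μ * r)) * u x) :
    ∀ x ∈ D, laplacian 3 u x - μ ^ 2 * u x = 0 := by
  obtain ⟨f, hf⟩ := ph_tietze isClosed_closure
    (⟨(closure D).domRestrict u, hu_cont.domRestrict⟩ : C(closure D, ℝ))
  have hf' : ∀ z ∈ closure D, f z = u z := fun z hz => DFunLike.congr_fun hf ⟨z, hz⟩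
  obtain ⟨v, hv, hvf⟩ := ph_exist σ hs hinv hD hDb hDir f (μ ^ 2) (by positivity)
  have hK : IsCompact (closure D) := hDb.isCompact_closure
  -- one-sided comparison
  have comp : ∀ c : ℝ, ∀ z ∈ closure D, c * (f z - v z) ≤ 0 := by
    intro c z₁ hz₁
    obtain ⟨x, hx, hmax⟩ := hK.exists_isMaxOn (f := fun z => c * (f z - v z)) ⟨z₁, hz₁⟩
      (by fun_prop)
    refine (hmax hz₁).trans ?_
    change c * (f x - v x) ≤ 0
    by_contra! hpos
    by_cases hxD : x ∈ D
    · obtain ⟨r, hr, hrD, hm⟩ := hmean x hxD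
      have h1 := ph_mvp σ hs v.continuous hμ hv hr hrD
      rw [← phM_congr σ hs (v := f) hr.le (fun z hz => hf' z (subset_closure (hrD hz))),
        ← hf' x hx] at hm
      have h2 := phM_lin σ hs f.continuous v.continuous c (-c) x r
      have h3 : phM σ (fun z => c * f z + -c * v z) x r ≤ c * (f x - v x) := by
        rw [← phM_const σ (c * (f x - v x)) x r]
        refine phM_mono σ hs (by fun_prop) (by fun_prop) hr.le fun z hz => ?_
        have : c * (f z - v z) ≤ c * (f x - v x) := hmax (subset_closure (hrD hz))
        linarith
      have h4 : 1 < Real.sinh (μ * r) / (μ * r) := by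
        have : 0 < μ * r := by positivity
        rw [one_lt_div this]
        exact Real.self_lt_sinh_iff.2 this
      rw [h2, hm, h1] at h3
      nlinarith
    · have : x ∈ frontier D := by rw [hD.frontier_eq]; exact ⟨hx, hxD⟩
      rw [hvf x this] at hpos
      simp at hpos
  have huv : ∀ z ∈ D, v z = u z := by
    intro z hz
    have h1 := comp 1 z (subset_closure hz)
    have h2 := comp (-1) z (subset_closure hz)
    rw [← hf' z (subset_closure hz)]
    linarith
  intro x hx
  obtain ⟨r, hr, hrD⟩ := nhds_basis_closedBall.mem_iff.1 (hD.mem_nhds hx)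
  obtain ⟨W, hW, hWu⟩ := ph_bump hD hu_C2 hr hrD
  have h1 : ContDiff ℝ 1 (fderiv ℝ W) := hW.fderiv_right (by norm_num)
  have hc0 : Continuous W := hW.continuous
  have hc2 : Continuous (fderiv ℝ (fderiv ℝ W)) := h1.continuous_fderiv one_ne_zero
  have hTc : Continuous (fun z => phTr (fderiv ℝ (fderiv ℝ W) z)) := by unfold phTr; fun_prop
  have w1 : phWk σ (ball x r) W (fun z => phTr (fderiv ℝ (fderiv ℝ W) z)) :=
    fun y s _ _ => ph_core σ hs hinv hW y s
  have hWv : ∀ z ∈ ball x r, v z = W z := fun z hz => by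
    rw [huv z (hrD (ball_subset_closedBall hz)), (hWu z (ball_subset_closedBall hz)).eq_of_nhds]
  have w2 : phWk σ (ball x r) W (fun z => μ ^ 2 * W z) := by
    refine phWk_congr hs (v := v) (F := fun z => μ ^ 2 * v z) hWv (fun z hz => by rw [hWv z hz]) ?_
    exact fun y s hs' hys => hv y s hs' (hys.trans (ball_subset_closedBall.trans hrD))
  have w3 := phWk_lin hs hc0 hc0 hTc (by fun_prop) 1 (-1) w1 w2
  have w4 := phWk_lin hs hc0 hc0 hTc (by fun_prop) (-1) 1 w1 w2
  have m3 := ph_max hs isOpen_ball (by fun_prop) (by fun_prop) w3 (mem_ball_self hr)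
    (fun z _ => by linarith)
  have m4 := ph_max hs isOpen_ball (by fun_prop) (by fun_prop) w4 (mem_ball_self hr)
    (fun z _ => by linarith)
  have hx' := hWu x (mem_closedBall_self hr.le)
  rw [← ph_lap_congr hx', ph_lap ((h1.differentiable one_ne_zero) x), ← hx'.eq_of_nhds]
  linarith

/-- Converse of Neumann's theorem in a Dirichlet domain `D ⊆ ℝ³`: if at every
`x ∈ D` the mean value equality `M(x, r(x), u) = (sinh(μ r(x))/(μ r(x))) u(x)`
holds for some admissible sphere, then `u` is panharmonic with coefficient `μ²`. -/
theorem stmt_13 (D : Set (EuclideanSpace ℝ (Fin 3)))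
    (hD_open : IsOpen D) (hD_conn : IsConnected D)
    (hD_bdd : Bornology.IsBounded D)
    (hDirichlet : ∀ f : EuclideanSpace ℝ (Fin 3) → ℝ, ContinuousOn f (frontier D) →
      ∃ w : EuclideanSpace ℝ (Fin 3) → ℝ, ContinuousOn w (closure D) ∧
        ContDiffOn ℝ 2 w D ∧ (∀ x ∈ D, laplacian 3 w x = 0) ∧
        Set.EqOn w f (frontier D))
    (u : EuclideanSpace ℝ (Fin 3) → ℝ)
    (hu_cont : ContinuousOn u (closure D))
    (hu_C2 : ContDiffOn ℝ 2 u D)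
    (μ : ℝ) (hμ : 0 < μ)
    (hmean : ∀ x ∈ D, ∃ r > (0 : ℝ), closedBall x r ⊆ D ∧
      sphereMean 3 u x r = (Real.sinh (μ * r) / (μ * r)) * u x) :
    ∀ x ∈ D, laplacian 3 u x - μ ^ 2 * u x = 0 := by
  set ν : Measure E := (μH[((3:ℕ):ℝ) - 1] : Measure E).restrict (sphere 0 1) with hν
  have hsm : ∀ x r, sphereMean 3 u x r = ∫ y, u (x + r • y) ∂((ν Set.univ)⁻¹ • ν) := by
    intro x r
    rfl
  by_cases hdeg : ν Set.univ = 0 ∨ ν Set.univ = ⊤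
  · have hu0 : ∀ x ∈ D, u x = 0 := by
      intro x hx
      obtain ⟨r, hr, -, hm⟩ := hmean x hx
      have h0 : sphereMean 3 u x r = 0 := by
        rw [hsm]
        rcases hdeg with h | h
        · rw [Measure.measure_univ_eq_zero.1 h]; simp
        · rw [h]; simp
      rw [h0] at hm
      have h4 : 0 < Real.sinh (μ * r) / (μ * r) := by
        have : 0 < μ * r := by positivity
        exact div_pos (Real.sinh_pos_iff.2 this) this
      rcases mul_eq_zero.1 hm.symm with h | h
      · exact absurd h h4.ne'
      · exact h
    intro x hx
    have h1 : u =ᶠ[nhds x] fun _ => 0 := by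
      filter_upwards [hD_open.mem_nhds hx] with z hz using hu0 z hz
    rw [ph_lap_congr h1, hu0 x hx]
    simp [laplacian]
  · push Not at hdeg
    obtain ⟨hd0, hdt⟩ := hdeg
    set σ : Measure E := (ν Set.univ)⁻¹ • ν with hσ
    haveI : IsProbabilityMeasure σ := ⟨by
      rw [hσ, Measure.smul_apply, smul_eq_mul, ENNReal.inv_mul_cancel hd0 hdt]⟩
    have hs : σ.restrict (sphere 0 1) = σ := by
      rw [hσ, Measure.restrict_smul, hν, Measure.restrict_restrict isClosed_sphere.measurableSet,
        Set.inter_self]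
    have hinv : ∀ L : E ≃ₗᵢ[ℝ] E, σ.map L = σ := by
      intro L
      rw [hσ, Measure.map_smul]
      congr 1
      have h1 : MeasurePreserving L (μH[((3:ℕ):ℝ) - 1] : Measure E) μH[((3:ℕ):ℝ) - 1] :=
        L.toIsometryEquiv.measurePreserving_hausdorffMeasure _
      have h2 := h1.restrict_preimage (s := sphere 0 1) isClosed_sphere.measurableSet
      have h3 : L ⁻¹' (sphere 0 1) = sphere 0 1 := by
        ext z; simp
      rw [h3] at h2
      exact h2.map_eq
    exact ph_final σ hs hinv hD_open hD_bdd hDirichlet u hu_cont hu_C2 μ hμ hmean
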